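/- Write Δ_{1,b} in 2×2-block form [[A, B], [C, X]], where A is the top-left 2×2 block (so A = I₂, B = −I₂, C = −(1/(b+1))·I₂, and X = (1/(b+1))·[[b+1, −b], [−b, b+1]]). Then for every real z with (b+1)²(z−1)² ≠ b², the Schur complement satisfies A − z·I₂ − B·(X − z·I₂)⁻¹·C = φ_b(z)·Δ_0 − ψ_b(z)·I₂, where φ_b(z) = b/((b+1)²(z−1)² − b²) and ψ_b(z) = z·((b+1)z − b − 2)/((b+1)z − 1). In other words, the level-1 probabilistic Laplacian is spectrally similar to the level-0 Laplacian with functions φ_b and ψ_b. -/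

import Mathlib

open Matrix

/-- The level-1 probabilistic graph Laplacian of the bubble-diamond graph, boundary
vertices listed first. -/
noncomputable def Delta1 (b : ℕ) : Matrix (Fin 4) (Fin 4) ℝ :=
  (1 / ((b : ℝ) + 1)) •
    !![(b : ℝ) + 1, 0, -((b : ℝ) + 1), 0;
       0, (b : ℝ) + 1, 0, -((b : ℝ) + 1);
       -1, 0, (b : ℝ) + 1, -(b : ℝ);
       0, -1, -(b : ℝ), (b : ℝ) + 1]

/-- The level-0 Laplacian. -/
noncomputable def Delta0 : Matrix (Fin 2) (Fin 2) ℝ := !![1, -1; -1, 1]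

/-- Top-left block of `Δ_{1,b}`: the identity. -/
noncomputable def blockA : Matrix (Fin 2) (Fin 2) ℝ := 1

/-- Top-right block of `Δ_{1,b}`: minus the identity. -/
noncomputable def blockB : Matrix (Fin 2) (Fin 2) ℝ := -1

/-- Bottom-left block of `Δ_{1,b}`. -/
noncomputable def blockC (b : ℕ) : Matrix (Fin 2) (Fin 2) ℝ := -(1 / ((b : ℝ) + 1)) • 1

/-- Bottom-right block of `Δ_{1,b}`. -/
noncomputable def blockX (b : ℕ) : Matrix (Fin 2) (Fin 2) ℝ :=
  (1 / ((b : ℝ) + 1)) • !![(b : ℝ) + 1, -(b : ℝ); -(b : ℝ), (b : ℝ) + 1]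

noncomputable def phib (b : ℕ) (z : ℝ) : ℝ :=
  (b : ℝ) / (((b : ℝ) + 1) ^ 2 * (z - 1) ^ 2 - (b : ℝ) ^ 2)

noncomputable def psib (b : ℕ) (z : ℝ) : ℝ :=
  z * (((b : ℝ) + 1) * z - (b : ℝ) - 2) / (((b : ℝ) + 1) * z - 1)

/-! Let `S = !![0, 1; 1, 0]`, an involution, and put `c = 1 / (b + 1)`, `d = b / (b + 1)`. Then
`Δ₀ = 1 - S` and `X = 1 - d • S`, so `X - z = (1 - z) - d • S` is inverted by its conjugate
`(1 - z) + d • S` divided by `(1 - z) ^ 2 - d ^ 2`. The Schur complement therefore lies in the span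
of `1` and `S`, which is also the span of `1` and `Δ₀`. Its coefficient of `Δ₀` is `φ_b`; the
remaining multiple of `1` simplifies to `-ψ_b` because the numerator `(1 - z) + d` cancels a factor
of the denominator. -/

theorem fin_four_eq_reindex_fromBlocks {α : Type*}
    (a₁₁ a₁₂ a₁₃ a₁₄ a₂₁ a₂₂ a₂₃ a₂₄ a₃₁ a₃₂ a₃₃ a₃₄ a₄₁ a₄₂ a₄₃ a₄₄ : α) :
    !![a₁₁, a₁₂, a₁₃, a₁₄;
       a₂₁, a₂₂, a₂₃, a₂₄;
       a₃₁, a₃₂, a₃₃, a₃₄;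
       a₄₁, a₄₂, a₄₃, a₄₄] =
      reindex finSumFinEquiv finSumFinEquiv
        (fromBlocks !![a₁₁, a₁₂; a₂₁, a₂₂] !![a₁₃, a₁₄; a₂₃, a₂₄]
          !![a₃₁, a₃₂; a₄₁, a₄₂] !![a₃₃, a₃₄; a₄₃, a₄₄]) := by
  ext i j
  fin_cases i <;> fin_cases j <;> rfl

section Involution

variable {n K : Type*} [Fintype n] [DecidableEq n] [Field K] {S : Matrix n n K}

theorem inv_smul_one_sub_smul_of_mul_self_eq_one (hS : S * S = 1) {a d : K}
    (had : a ^ 2 ≠ d ^ 2) :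
    (a • (1 : Matrix n n K) - d • S)⁻¹ = (a ^ 2 - d ^ 2)⁻¹ • (a • 1 + d • S) := by
  have had' : a ^ 2 - d ^ 2 ≠ 0 := sub_ne_zero.mpr had
  have conj_mul : (a • (1 : Matrix n n K) - d • S) * (a • 1 + d • S) = (a ^ 2 - d ^ 2) • 1 := by
    simp only [sub_mul, mul_add, smul_mul_smul_comm, hS, one_mul, mul_one]
    module
  refine inv_eq_right_inv ?_
  rw [mul_smul_comm, conj_mul, inv_smul_smul₀ had']

theorem schur_complement_of_mul_self_eq_one (hS : S * S = 1) (c : K) {d z : K}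
    (hz : (1 - z) ^ 2 ≠ d ^ 2) :
    1 - z • (1 : Matrix n n K) - -1 * (1 - d • S - z • 1)⁻¹ * (-c • 1) =
      (c * d / ((1 - z) ^ 2 - d ^ 2)) • (1 - S) - (z - 1 + c / (1 - z - d)) • 1 := by
  have hD : (1 - z) ^ 2 - d ^ 2 ≠ 0 := sub_ne_zero.mpr hz
  have hsub : 1 - z - d ≠ 0 := by
    intro h
    exact hD (by linear_combination (1 - z + d) * h)
  have hX : 1 - d • S - z • 1 = (1 - z) • (1 : Matrix n n K) - d • S := by module
  rw [hX, inv_smul_one_sub_smul_of_mul_self_eq_one hS hz]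
  simp only [neg_mul, one_mul, mul_smul_comm, mul_one]
  match_scalars <;> field_simp
  ring

end Involution

section Coefficients

variable {K : Type*} [Field K] {β : K}

theorem laplacian_coeff_eq (hβ : β + 1 ≠ 0) (z : K) :
    1 / (β + 1) * (β / (β + 1)) / ((1 - z) ^ 2 - (β / (β + 1)) ^ 2) =
      β / ((β + 1) ^ 2 * (z - 1) ^ 2 - β ^ 2) := by
  have hden : (1 - z) ^ 2 - (β / (β + 1)) ^ 2 =
      ((β + 1) ^ 2 * (z - 1) ^ 2 - β ^ 2) / (β + 1) ^ 2 := by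
    field_simp
    ring
  rw [hden]
  field_simp

theorem identity_coeff_eq (hβ : β + 1 ≠ 0) {z : K} (hz : (β + 1) * z - 1 ≠ 0) :
    z - 1 + 1 / (β + 1) / (1 - z - β / (β + 1)) =
      z * ((β + 1) * z - β - 2) / ((β + 1) * z - 1) := by
  have hden : 1 - z - β / (β + 1) = -((β + 1) * z - 1) / (β + 1) := by
    field_simp
    ring
  rw [hden, div_div_div_cancel_right₀ hβ, div_neg, ← sub_eq_add_neg, eq_div_iff hz, sub_mul,
    div_mul_cancel₀ _ hz]
  ring

end Coefficients

theorem schur_complement_spectral_similarity_general {K : Type*} [Field K] (β : K)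
    (hβ : β + 1 ≠ 0) :
    (1 / (β + 1)) •
        !![β + 1, 0, -(β + 1), 0;
           0, β + 1, 0, -(β + 1);
           -1, 0, β + 1, -β;
           0, -1, -β, β + 1] =
      reindex finSumFinEquiv finSumFinEquiv
        (fromBlocks (1 : Matrix (Fin 2) (Fin 2) K) (-1) (-(1 / (β + 1)) • 1)
          ((1 / (β + 1)) • !![β + 1, -β; -β, β + 1])) ∧
    ∀ z : K, (β + 1) ^ 2 * (z - 1) ^ 2 ≠ β ^ 2 →
      (1 : Matrix (Fin 2) (Fin 2) K) - z • 1 -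
          -1 * ((1 / (β + 1)) • !![β + 1, -β; -β, β + 1] - z • 1)⁻¹ * (-(1 / (β + 1)) • 1) =
        (β / ((β + 1) ^ 2 * (z - 1) ^ 2 - β ^ 2)) • !![1, -1; -1, 1] -
          (z * ((β + 1) * z - β - 2) / ((β + 1) * z - 1)) • 1 := by
  refine ⟨?_, fun z hz ↦ ?_⟩
  · have hone : (1 / (β + 1)) • !![β + 1, 0; 0, β + 1] = 1 := by
      simp [one_fin_two, hβ]
    have hnegOne : (1 / (β + 1)) • !![-(β + 1), 0; 0, -(β + 1)] = -1 := by
      simp [one_fin_two, hβ, -neg_add_rev]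
    have hdiag : (1 / (β + 1)) • !![-1, 0; 0, -1] =
        -(1 / (β + 1)) • (1 : Matrix (Fin 2) (Fin 2) K) := by
      simp [one_fin_two]
    have hblocks : (1 / (β + 1)) •
        fromBlocks !![β + 1, 0; 0, β + 1] !![-(β + 1), 0; 0, -(β + 1)]
          !![-1, 0; 0, -1] !![β + 1, -β; -β, β + 1] =
        fromBlocks 1 (-1) (-(1 / (β + 1)) • 1) ((1 / (β + 1)) • !![β + 1, -β; -β, β + 1]) := by
      rw [fromBlocks_smul, hone, hnegOne, hdiag]
    rw [fin_four_eq_reindex_fromBlocks, ← hblocks]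
    rfl
  · have hX : (1 / (β + 1)) • !![β + 1, -β; -β, β + 1] = 1 - (β / (β + 1)) • !![0, 1; 1, 0] := by
      simp [one_fin_two, hβ, div_eq_inv_mul]
    have hΔ : !![1, -1; -1, 1] = (1 : Matrix (Fin 2) (Fin 2) K) - !![0, 1; 1, 0] := by
      simp [one_fin_two]
    have hswap : !![0, 1; 1, 0] * !![0, 1; 1, 0] = (1 : Matrix (Fin 2) (Fin 2) K) := by
      simp [one_fin_two]
    have hpole : (β + 1) * z - 1 ≠ 0 := by
      intro h
      exact hz (by linear_combination ((β + 1) * (z - 1) - β) * h)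
    have hz' : (1 - z) ^ 2 ≠ (β / (β + 1)) ^ 2 := by
      rw [div_pow, Ne, eq_div_iff (pow_ne_zero 2 hβ)]
      intro h
      exact hz (by linear_combination h)
    rw [hX, schur_complement_of_mul_self_eq_one hswap _ hz', laplacian_coeff_eq hβ,
      identity_coeff_eq hβ hpole, hΔ]

/-- `Δ_{1,b}` has the block form `[[A, B], [C, X]]` with `A = I₂`, `B = −I₂`,
`C = −(1/(b+1))·I₂` and `X = (1/(b+1))·[[b+1, −b], [−b, b+1]]`, and for every real `z`
with `(b+1)²(z−1)² ≠ b²` the Schur complement satisfies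
`A − z·I₂ − B·(X − z·I₂)⁻¹·C = φ_b(z)·Δ₀ − ψ_b(z)·I₂`: the level-1 probabilistic
Laplacian is spectrally similar to the level-0 Laplacian with functions `φ_b, ψ_b`. -/
theorem schur_complement_spectral_similarity (b : ℕ) (hb : 2 ≤ b) :
    Delta1 b = Matrix.reindex finSumFinEquiv finSumFinEquiv
      (Matrix.fromBlocks blockA blockB (blockC b) (blockX b)) ∧
    ∀ z : ℝ, ((b : ℝ) + 1) ^ 2 * (z - 1) ^ 2 ≠ (b : ℝ) ^ 2 →
      blockA - z • (1 : Matrix (Fin 2) (Fin 2) ℝ) -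
          blockB * (blockX b - z • 1)⁻¹ * blockC b =
        phib b z • Delta0 - psib b z • 1 :=
  schur_complement_spectral_similarity_general (b : ℝ) (by positivity)
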